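/- arXiv:1405.7849 — 2 statements merged into one kernel-verified Lean document; each statement's English description precedes it below -/
import Mathlib

section
/- For every integer k ≥ 0, there are infinitely many n such that every deterministic OBDD on n variables computing the partial function PartialMOD^k_n has width at least 2^{k+1}. -/
/-- Number of 1s in a binary string ν ∈ {0,1}^n. -/
def countOnes {n : ℕ} (ν : Fin n → Bool) : ℕ :=
  (Finset.univ.filter (fun i => ν i = true)).card

/-- Number of 0s in a binary string ν ∈ {0,1}^n. -/
def countZeros {n : ℕ} (ν : Fin n → Bool) : ℕ :=
  (Finset.univ.filter (fun i => ν i = false)).card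

/-- Number of 1s among the first `k` bits. -/
def countOnesFirst (k : ℕ) {n : ℕ} (ν : Fin n → Bool) : ℕ :=
  (Finset.univ.filter (fun i : Fin n => (i : ℕ) < k ∧ ν i = true)).card

/-- Number of 0s among the first `k` bits. -/
def countZerosFirst (k : ℕ) {n : ℕ} (ν : Fin n → Bool) : ℕ :=
  (Finset.univ.filter (fun i : Fin n => (i : ℕ) < k ∧ ν i = false)).card

/-- A deterministic OBDD of width `d` on `n` Boolean variables. -/
structure DOBDD (n d : ℕ) where
  ord : Equiv.Perm (Fin n)
  T : Fin n → Bool → Fin d → Fin d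
  start : Fin d
  Accept : Finset (Fin d)

/-- The node reached by a deterministic OBDD after reading all input bits. -/
def DOBDD.run {n d : ℕ} (M : DOBDD n d) (ν : Fin n → Bool) : Fin d :=
  (List.finRange n).foldl (fun v j => M.T j (ν (M.ord j)) v) M.start

def DOBDD.accepts {n d : ℕ} (M : DOBDD n d) (ν : Fin n → Bool) : Prop :=
  M.run ν ∈ M.Accept

/-- A deterministic OBDD computes a total Boolean function. -/
def DOBDD.computes {n d : ℕ} (M : DOBDD n d) (f : (Fin n → Bool) → Bool) : Prop :=
  ∀ ν, M.accepts ν ↔ f ν = true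

/-- A nondeterministic OBDD of width `d` on `n` Boolean variables. -/
structure NOBDD (n d : ℕ) where
  ord : Equiv.Perm (Fin n)
  T : Fin n → Bool → Fin d → Set (Fin d)
  start : Fin d
  Accept : Finset (Fin d)

/-- The set of nodes reachable by a nondeterministic OBDD after reading all input bits. -/
def NOBDD.reach {n d : ℕ} (M : NOBDD n d) (ν : Fin n → Bool) : Set (Fin d) :=
  (List.finRange n).foldl (fun S j => {w | ∃ v ∈ S, w ∈ M.T j (ν (M.ord j)) v}) {M.start}

def NOBDD.accepts {n d : ℕ} (M : NOBDD n d) (ν : Fin n → Bool) : Prop :=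
  ∃ v ∈ M.reach ν, v ∈ M.Accept

/-- A nondeterministic OBDD computes a total Boolean function. -/
def NOBDD.computes {n d : ℕ} (M : NOBDD n d) (f : (Fin n → Bool) → Bool) : Prop :=
  ∀ ν, M.accepts ν ↔ f ν = true

/-- The class of Boolean functions on n variables computed by deterministic
OBDDs of width at most `w`. -/
def OBDDclass (n w : ℕ) : Set ((Fin n → Bool) → Bool) :=
  {f | ∃ d, d ≤ w ∧ ∃ M : DOBDD n d, M.computes f}

/-- The class of Boolean functions on n variables computed by nondeterministic
OBDDs of width at most `w`. -/
def NOBDDclass (n w : ℕ) : Set ((Fin n → Bool) → Bool) :=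
  {f | ∃ d, d ≤ w ∧ ∃ M : NOBDD n d, M.computes f}

/-- Final probability distribution of a stable probabilistic OBDD given by the pair of
left-stochastic matrices `A`, variable order `ord`, and initial node `s`. -/
noncomputable def stableProbRun {n d : ℕ} (A : Bool → Matrix (Fin d) (Fin d) ℝ)
    (ord : Equiv.Perm (Fin n)) (s : Fin d) (ν : Fin n → Bool) : Fin d → ℝ :=
  (List.finRange n).foldl (fun v j => (A (ν (ord j))).mulVec v)
    (fun i => if i = s then 1 else 0)

/-- Final quantum state of a stable ID quantum OBDD given by the pair of matrices `U`
and the initial computational-basis state `q0`, reading bits in the natural order. -/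
noncomputable def quantumRunStable {n d : ℕ} (U : Bool → Matrix (Fin d) (Fin d) ℂ) (q0 : Fin d)
    (ν : Fin n → Bool) : Fin d → ℂ :=
  (List.finRange n).foldl (fun ψ j => (U (ν j)).mulVec ψ)
    (fun i => if i = q0 then 1 else 0)

/-- A quantum OBDD of width `d` on `n` Boolean variables. -/
structure QOBDD (n d : ℕ) where
  ord : Equiv.Perm (Fin n)
  U : Fin n → Bool → Matrix (Fin d) (Fin d) ℂ
  unitary : ∀ j b, U j b ∈ Matrix.unitaryGroup (Fin d) ℂ
  q0 : Fin d
  Accept : Finset (Fin d)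

/-- The final state of a quantum OBDD on input ν. -/
noncomputable def QOBDD.finalState {n d : ℕ} (M : QOBDD n d) (ν : Fin n → Bool) : Fin d → ℂ :=
  (List.finRange n).foldl (fun ψ j => (M.U j (ν (M.ord j))).mulVec ψ)
    (fun i => if i = M.q0 then 1 else 0)

/-- The acceptance probability of a quantum OBDD on input ν. -/
noncomputable def QOBDD.acceptProb {n d : ℕ} (M : QOBDD n d) (ν : Fin n → Bool) : ℝ :=
  ∑ i ∈ M.Accept, Complex.normSq (M.finalState ν i)

/-- `NotO_n(ν) = 0` iff `#0(ν) = #1(ν)`. -/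
def NotO (n : ℕ) (ν : Fin n → Bool) : Bool := !decide (countZeros ν = countOnes ν)

/-- `NotSQUARE_n(ν) = 0` iff `(#0(ν))² = #1(ν)`. -/
def NotSQUARE (n : ℕ) (ν : Fin n → Bool) : Bool := !decide ((countZeros ν) ^ 2 = countOnes ν)

/-- `NotPOWER_n(ν) = 0` iff `2^{#0(ν)} = #1(ν)`. -/
def NotPOWER (n : ℕ) (ν : Fin n → Bool) : Bool := !decide (2 ^ (countZeros ν) = countOnes ν)

/-- `MOD^k_n(ν) = 1` iff `#1(ν) ≡ 0 (mod k)`. -/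
def MODf (n k : ℕ) (ν : Fin n → Bool) : Bool := decide (countOnes ν % k = 0)

/-- `NotO^k_n(ν) = 0` iff `#^k_0(ν) = #^k_1(ν) = k/2`. -/
def NotOk (n k : ℕ) (ν : Fin n → Bool) : Bool :=
  !decide (countZerosFirst k ν = k / 2 ∧ countOnesFirst k ν = k / 2)

/-- The ordered subsequence of value bits `ν_{2i}` (1-indexed, `1 ≤ i ≤ k/2`) whose
marker bit `ν_{2i-1}` equals `b`; `b = false` gives `α(ν)` and `b = true` gives `β(ν)`. -/
def valueSubseq {n : ℕ} (k : ℕ) (b : Bool) (ν : Fin n → Bool) : List Bool :=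
  (List.range (k / 2)).filterMap (fun j =>
    if h : 2 * j + 1 < n then
      if ν ⟨2 * j, by omega⟩ = b then some (ν ⟨2 * j + 1, h⟩) else none
    else none)

/-- `EQS^k_n(ν) = 1` iff `α(ν) = β(ν)`. -/
def EQS (n k : ℕ) (ν : Fin n → Bool) : Bool :=
  decide (valueSubseq k false ν = valueSubseq k true ν)

/-- `NotEQS^k_n(ν) = 1 - EQS^k_n(ν)`. -/
def NotEQS (n k : ℕ) (ν : Fin n → Bool) : Bool := !(EQS n k ν)

/-!
Let inputs with `0` ones modulo `m` be accepted and inputs with `a` ones modulo `m` be rejected;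
here `m = 2 ^ (k + 1)` and `a = 2 ^ k`. Give each node the set of residues modulo `m` of the numbers
of ones in the words leading to it. While at least `m` letters remain, no such set meets its
translate by `a`, since a common suffix would carry the residues `0` and `a` to the same final node.
If every divisor of `m` up to the width `d` divides `a`, then `a` lies in the subgroup of `ZMod m`
generated by any `0 < δ ≤ d`, so no nonempty such set is invariant under translation by `δ`. Among
the words of `d` letters with `0, …, d` ones, two lead from a given node to the same node, which
therefore receives two distinct translates of the given node's set and has a strictly larger set.
After `m` such stages a set would have more than `m` residues.
-/

open scoped Pointwise

section Residues

variable {α σ : Type*}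

/-- The node reached from `v` by reading the word `w` in a levelled program with transitions `T`,
the first letter of `w` being read at level `j`. -/
def layeredRun (T : ℕ → α → σ → σ) (j : ℕ) (w : List α) (v : σ) : σ :=
  (w.zipIdx j).foldl (fun v bi => T bi.2 bi.1 v) v

lemma layeredRun_append (T : ℕ → α → σ → σ) (j : ℕ) (u w : List α) (v : σ) :
    layeredRun T j (u ++ w) v = layeredRun T (j + u.length) w (layeredRun T j u v) := by
  simp only [layeredRun, List.zipIdx_append, List.foldl_append]

lemma layeredRun_eq_foldl_finRange (T : ℕ → α → σ → σ) (w : List α) (v : σ) :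
    layeredRun T 0 w v =
      (List.finRange w.length).foldl (fun v (i : Fin w.length) => T i w[i] v) v := by
  have hzip : w.zipIdx = (List.finRange w.length).map fun (i : Fin w.length) => (w[i], (i : ℕ)) :=
    List.ext_getElem (by simp) (by simp)
  rw [layeredRun, hzip, List.foldl_map]

/-- The classes modulo `m` of the numbers of ones in those words of length `j` that lead a levelled
program from its initial node `s` to the node `v`. -/
def onesResidues (m : ℕ) (T : ℕ → Bool → σ → σ) (s : σ) (j : ℕ) (v : σ) : Set (ZMod m) :=
  {r | ∃ u : List Bool, u.length = j ∧ layeredRun T 0 u s = v ∧ (u.count true : ZMod m) = r}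

variable {m : ℕ} {T : ℕ → Bool → σ → σ} {s : σ}

lemma zero_mem_onesResidues_zero : 0 ∈ onesResidues m T s 0 s :=
  ⟨[], rfl, rfl, by simp⟩

lemma vadd_onesResidues_subset (w : List Bool) (j : ℕ) (v : σ) :
    (w.count true : ZMod m) +ᵥ onesResidues m T s j v ⊆
      onesResidues m T s (j + w.length) (layeredRun T j w v) := by
  rintro _ ⟨_, ⟨u, rfl, rfl, rfl⟩, rfl⟩
  refine ⟨u ++ w, List.length_append, ?_, ?_⟩
  · rw [layeredRun_append, zero_add]
  · simp [add_comm]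

lemma exists_vadd_onesResidues_subset {i l : ℕ} (hil : i ≤ l) (j : ℕ) (v : σ) :
    ∃ v', (i : ZMod m) +ᵥ onesResidues m T s j v ⊆ onesResidues m T s (j + l) v' := by
  let w := List.replicate i true ++ List.replicate (l - i) false
  have hlength : w.length = l := by simp [w, hil]
  have hcount : w.count true = i := by simp [w, List.count_replicate]
  have hw := vadd_onesResidues_subset (m := m) (T := T) (s := s) w j v
  rw [hlength, hcount] at hw
  exact ⟨layeredRun T j w v, hw⟩

lemma add_notMem_onesResidues [NeZero m] {n j : ℕ} {c : ZMod m}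
    (hsep : ∀ v, 0 ∈ onesResidues m T s n v → c ∉ onesResidues m T s n v)
    (hj : j + m ≤ n) {v : σ} {r : ZMod m} (hr : r ∈ onesResidues m T s j v) :
    c + r ∉ onesResidues m T s j v := by
  intro hcr
  have hlength : (-r).val ≤ n - j := by have := (-r).val_lt; omega
  obtain ⟨v', hv'⟩ := exists_vadd_onesResidues_subset (m := m) (T := T) (s := s) hlength j v
  rw [ZMod.natCast_zmod_val, Nat.add_sub_cancel' (by omega)] at hv'
  exact hsep v' (hv' ⟨r, hr, by simp⟩) (hv' ⟨c + r, hcr, by simp⟩)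

end Residues

section Growth

lemma natCast_mem_zmultiples_of_gcd_dvd {m i a : ℕ} (h : i.gcd m ∣ a) :
    (a : ZMod m) ∈ AddSubgroup.zmultiples (i : ZMod m) := by
  obtain ⟨c, rfl⟩ := h
  have hbezout : ((i.gcd m : ℕ) : ZMod m) = i * (i.gcdA m : ZMod m) := by
    simpa using congrArg (Int.cast : ℤ → ZMod m) (Nat.gcd_eq_gcd_ab i m)
  refine ⟨i.gcdA m * c, ?_⟩
  simp only [Nat.cast_mul, hbezout, zsmul_eq_mul, Int.cast_mul, Int.cast_natCast]
  ring

lemma neg_add_mem_stabilizer_of_vadd_subset {G X : Type*} [AddGroup G] [AddAction G X] {g h : G}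
    {S S' : Set X} (hfin : S'.Finite) (hg : g +ᵥ S ⊆ S') (hh : h +ᵥ S ⊆ S')
    (hcard : S'.ncard ≤ S.ncard) : -g + h ∈ AddAction.stabilizer G S := by
  have hgS : g +ᵥ S = S' := Set.eq_of_subset_of_ncard_le hg (by rwa [Set.ncard_vadd_set]) hfin
  have hhS : h +ᵥ S = S' := Set.eq_of_subset_of_ncard_le hh (by rwa [Set.ncard_vadd_set]) hfin
  rw [AddAction.mem_stabilizer_iff, add_vadd, hhS, ← hgS, neg_vadd_vadd]

variable {σ : Type*} [Fintype σ] {m a : ℕ} [NeZero m] {T : ℕ → Bool → σ → σ} {s : σ}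

lemma exists_ncard_onesResidues_lt (hdvd : ∀ q ≤ Fintype.card σ, q ∣ m → q ∣ a) {j : ℕ} {v : σ}
    (hne : (onesResidues m T s j v).Nonempty)
    (hadd : ∀ r ∈ onesResidues m T s j v, (a : ZMod m) + r ∉ onesResidues m T s j v) :
    ∃ v', (onesResidues m T s j v).ncard <
      (onesResidues m T s (j + Fintype.card σ) v').ncard := by
  by_contra! hcard
  have hstep (i : Fin (Fintype.card σ + 1)) :=
    exists_vadd_onesResidues_subset (m := m) (T := T) (s := s) i.is_le j v
  choose f hf using hstep
  obtain ⟨x, y, hxy, hfxy⟩ : ∃ x y, x < y ∧ f x = f y := by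
    obtain ⟨x, y, hne, hfxy⟩ := Fintype.exists_ne_map_eq_of_card_lt f (by simp)
    rcases hne.lt_or_gt with hlt | hlt
    exacts [⟨x, y, hlt, hfxy⟩, ⟨y, x, hlt, hfxy.symm⟩]
  have hstab : ((y - x : ℕ) : ZMod m) ∈ AddAction.stabilizer (ZMod m) (onesResidues m T s j v) := by
    rw [Nat.cast_sub hxy.le, sub_eq_neg_add]
    exact neg_add_mem_stabilizer_of_vadd_subset (Set.toFinite _) (hf x) (hfxy ▸ hf y) (hcard _)
  have hgcd : (y - x : ℕ).gcd m ∣ a := by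
    refine hdvd _ ?_ (Nat.gcd_dvd_right _ _)
    have := Nat.gcd_le_left m (Nat.sub_pos_of_lt hxy)
    omega
  have ha := AddSubgroup.zmultiples_le_of_mem hstab (natCast_mem_zmultiples_of_gcd_dvd hgcd)
  obtain ⟨r, hr⟩ := hne
  exact hadd r hr ((AddAction.mem_stabilizer_iff.1 ha).subset (Set.vadd_mem_vadd_set hr))

lemma exists_lt_ncard_onesResidues (hdvd : ∀ q ≤ Fintype.card σ, q ∣ m → q ∣ a) {n : ℕ}
    (hsep : ∀ v, 0 ∈ onesResidues m T s n v → (a : ZMod m) ∉ onesResidues m T s n v) (t : ℕ)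
    (ht : t * Fintype.card σ + m ≤ n) :
    ∃ v, t < (onesResidues m T s (t * Fintype.card σ) v).ncard := by
  induction t with
  | zero =>
    rw [zero_mul]
    exact ⟨s, (Set.ncard_pos (Set.toFinite _)).2 ⟨0, zero_mem_onesResidues_zero⟩⟩
  | succ t ih =>
    rw [Nat.succ_mul] at ht ⊢
    obtain ⟨v, hv⟩ := ih (by omega)
    have hne := Set.nonempty_of_ncard_ne_zero (Nat.ne_zero_of_lt hv)
    obtain ⟨v', hv'⟩ := exists_ncard_onesResidues_lt hdvd hne fun r hr =>
      add_notMem_onesResidues hsep (by omega) hr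
    exact ⟨v', (Nat.succ_le_of_lt hv).trans_lt hv'⟩

lemma exists_le_card_dvd_not_dvd {n : ℕ} (hn : m * m ≤ n)
    (hsep : ∀ v, 0 ∈ onesResidues m T s n v → (a : ZMod m) ∉ onesResidues m T s n v) :
    ∃ q ≤ Fintype.card σ, q ∣ m ∧ ¬ q ∣ a := by
  by_contra! hdvd
  have hma : ¬ m ∣ a := by
    intro hma
    have hmn : 0 + m ≤ n := by rw [zero_add]; exact (Nat.le_mul_self m).trans hn
    have hzero := zero_mem_onesResidues_zero (m := m) (T := T) (s := s)
    apply add_notMem_onesResidues hsep hmn hzero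
    rwa [(ZMod.natCast_eq_zero_iff a m).2 hma, zero_add]
  have hcard : Fintype.card σ < m := by
    by_contra! hle
    exact hma (hdvd m hle dvd_rfl)
  obtain ⟨v, hv⟩ := exists_lt_ncard_onesResidues hdvd hsep m (by nlinarith)
  exact hv.not_ge ((Set.ncard_le_card _).trans_eq (Nat.card_zmod m))

end Growth

namespace DOBDD

variable {n d : ℕ}

/-- The transitions of `M` indexed by all of `ℕ`, the levels from `n` on being trivial. -/
noncomputable def transition (M : DOBDD n d) : ℕ → Bool → Fin d → Fin d :=
  Function.extend Fin.val M.T fun _ _ v => v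

lemma exists_run_eq_layeredRun (M : DOBDD n d) {u : List Bool} (hu : u.length = n) :
    ∃ ν, M.run ν = layeredRun M.transition 0 u M.start ∧ countOnes ν = u.count true := by
  subst hu
  refine ⟨fun i => u[M.ord.symm i], ?_, ?_⟩
  · simp only [run, transition, layeredRun_eq_foldl_finRange, Equiv.symm_apply_apply,
      Fin.val_injective.extend_apply]
  · calc countOnes (fun i => u[M.ord.symm i])
      _ = countOnes u.get :=
        Finset.card_bij (fun i _ => M.ord.symm i) (by simp) (by simp)
          fun i hi => ⟨M.ord i, by simpa using hi, by simp⟩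
      _ = u.count true := Fin.card_filter_univ_eq_vector_get_eq_count true ⟨u, rfl⟩

end DOBDD

theorem partialMOD_deterministic_lower_bound_general {m a n d : ℕ} [NeZero m] (hn : m * m ≤ n)
    (M : DOBDD n d)
    (hM : ∀ ν : Fin n → Bool,
      (countOnes ν ≡ 0 [MOD m] → M.accepts ν) ∧ (countOnes ν ≡ a [MOD m] → ¬ M.accepts ν)) :
    ∃ q ≤ d, q ∣ m ∧ ¬ q ∣ a := by
  suffices hsep : ∀ v, 0 ∈ onesResidues m M.transition M.start n v →
      (a : ZMod m) ∉ onesResidues m M.transition M.start n v by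
    simpa only [Fintype.card_fin] using exists_le_card_dvd_not_dvd hn hsep
  rintro _ ⟨u, hu, rfl, hu0⟩ ⟨u', hu', hrun, hua⟩
  obtain ⟨ν, hν, hcount⟩ := M.exists_run_eq_layeredRun hu
  obtain ⟨ν', hν', hcount'⟩ := M.exists_run_eq_layeredRun hu'
  have haccepts : M.accepts ν := (hM ν).1 <| by
    rw [← ZMod.natCast_eq_natCast_iff, hcount, hu0, Nat.cast_zero]
  have hrejects : ¬ M.accepts ν' := (hM ν').2 <| by
    rw [← ZMod.natCast_eq_natCast_iff, hcount', hua]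
  apply hrejects
  rwa [DOBDD.accepts, hν', hrun, ← hν]

/-- For every `k ≥ 0`, there are infinitely many `n` such that any deterministic OBDD
computing the partial function `PartialMOD^k_n` has width at least `2^{k+1}`. -/
theorem partialMOD_deterministic_lower_bound (k : ℕ) :
    ∀ N : ℕ, ∃ n, N ≤ n ∧
      ∀ (d : ℕ) (M : DOBDD n d),
        (∀ ν : Fin n → Bool,
          (countOnes ν % 2 ^ (k + 1) = 0 → M.accepts ν) ∧
          (countOnes ν % 2 ^ (k + 1) = 2 ^ k → ¬ M.accepts ν)) →
        2 ^ (k + 1) ≤ d := by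
  intro N
  refine ⟨max N (2 ^ (k + 1) * 2 ^ (k + 1)), le_max_left _ _, fun d M hM => ?_⟩
  have hlt : 2 ^ k < 2 ^ (k + 1) := Nat.pow_lt_pow_succ one_lt_two
  obtain ⟨q, hqd, hqm, hqa⟩ := partialMOD_deterministic_lower_bound_general (a := 2 ^ k)
    (le_max_right _ _) M (by simpa only [Nat.ModEq, Nat.zero_mod, Nat.mod_eq_of_lt hlt] using hM)
  exact (Nat.eq_prime_pow_of_dvd_least_prime_pow Nat.prime_two hqa hqm) ▸ hqd
end

section
/- For all integers n and d with 16 ≤ d ≤ 2^{n/4}: there exists a Boolean function on {0,1}^n computed by a deterministic OBDD of width at most d but by no deterministic OBDD of width at most ⌊d/8⌋ − 1, and there exists a Boolean function on {0,1}^n computed by a nondeterministic OBDD of width at most d but by no nondeterministic OBDD of width at most ⌊d/8⌋ − 1; i.e., OBDD^{⌊d/8⌋−1} ⊊ OBDD^d and NOBDD^{⌊d/8⌋−1} ⊊ NOBDD^d. -/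
/-!
The single function `EQS n (4 * q)`, with `4 * 2 ^ q ≤ d < 8 * 2 ^ q`, separates both hierarchies.

In the natural order, it suffices to remember by which word the longer of the two value
subsequences extends the other. That word cannot exceed `q` bits: an overhang is at most the number
of (marker, value) pairs read so far and must be matched by the pairs still to come, and there are
`2 * q` pairs in all. This gives width `4 * 2 ^ q`.

Conversely, given any order, cut it where exactly `q` of the `2 * q` value bits have been read, and
choose the markers so that the values before the cut are compared with those after it. What remains
is the equality of two `q`-bit words across the cut, which has a fooling set of size `2 ^ q`, so
that even nondeterministic programs have width at least `2 ^ q`.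
-/

theorem foldl_finRange_induction {β : Type*} {n : ℕ} (P : ℕ → β → Prop) (step : β → Fin n → β)
    (v₀ : β) (zero : P 0 v₀) (succ : ∀ (j : Fin n) v, P j v → P (j + 1) (step v j)) :
    P n ((List.finRange n).foldl step v₀) := by
  induction n with
  | zero => simpa using zero
  | succ n ih =>
    rw [List.finRange_succ_last, List.foldl_append, List.foldl_map]
    exact succ (Fin.last n) _ (ih (fun v j => step v j.castSucc) fun j => succ j.castSucc)

/-- The input that agrees with `ν` on the first `j` bits read in the order `π`, and with `ν'` on
the remaining ones. -/
def splice {n : ℕ} (π : Equiv.Perm (Fin n)) (j : ℕ) (ν ν' : Fin n → Bool) : Fin n → Bool :=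
  fun i => if (π.symm i : ℕ) < j then ν i else ν' i

theorem splice_self {n : ℕ} (π : Equiv.Perm (Fin n)) (j : ℕ) (ν : Fin n → Bool) :
    splice π j ν ν = ν :=
  funext fun _ => ite_self _

theorem splice_last {n : ℕ} (π : Equiv.Perm (Fin n)) (ν ν' : Fin n → Bool) :
    splice π n ν ν' = ν :=
  funext fun i => if_pos (π.symm i).isLt

/-- The subfunction of `f` left after the first `j` bits of `ν` have been read in the order `π`.
It is kept as a function of all `n` bits, which ignores those already read. -/
def subfunction {n : ℕ} (f : (Fin n → Bool) → Bool) (π : Equiv.Perm (Fin n)) (j : ℕ)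
    (ν : Fin n → Bool) : (Fin n → Bool) → Bool :=
  fun ν' => f (splice π j ν ν')

section Classes

variable {n : ℕ}

theorem OBDDclass_mono {w w' : ℕ} (h : w ≤ w') : OBDDclass n w ⊆ OBDDclass n w' :=
  fun _ ⟨d, hd, hf⟩ => ⟨d, hd.trans h, hf⟩

theorem NOBDDclass_mono {w w' : ℕ} (h : w ≤ w') : NOBDDclass n w ⊆ NOBDDclass n w' :=
  fun _ ⟨d, hd, hf⟩ => ⟨d, hd.trans h, hf⟩

/-- A deterministic OBDD viewed as a nondeterministic one with singleton successor sets. -/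
def DOBDD.toNOBDD {d : ℕ} (M : DOBDD n d) : NOBDD n d where
  ord := M.ord
  T j b v := {M.T j b v}
  start := M.start
  Accept := M.Accept

theorem DOBDD.reach_toNOBDD {d : ℕ} (M : DOBDD n d) (ν : Fin n → Bool) :
    M.toNOBDD.reach ν = {M.run ν} :=
  List.foldl_hom (fun v : Fin d => ({v} : Set (Fin d))) fun v j => by
    ext w
    simp [DOBDD.toNOBDD]

theorem OBDDclass_subset_NOBDDclass (w : ℕ) : OBDDclass n w ⊆ NOBDDclass n w := by
  rintro f ⟨d, hd, M, hM⟩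
  refine ⟨d, hd, M.toNOBDD, fun ν => ?_⟩
  rw [← hM ν, NOBDD.accepts, M.reach_toNOBDD]
  simp [DOBDD.accepts, DOBDD.toNOBDD]

theorem OBDDclass_ssubset_and_NOBDDclass_ssubset {w w' : ℕ} (h : w ≤ w')
    {f : (Fin n → Bool) → Bool} (f_mem : f ∈ OBDDclass n w') (f_notMem : f ∉ NOBDDclass n w) :
    OBDDclass n w ⊂ OBDDclass n w' ∧ NOBDDclass n w ⊂ NOBDDclass n w' :=
  ⟨(OBDDclass_mono h).ssubset_of_mem_notMem f_mem fun hf =>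
      f_notMem (OBDDclass_subset_NOBDDclass w hf),
    (NOBDDclass_mono h).ssubset_of_mem_notMem (OBDDclass_subset_NOBDDclass w' f_mem) f_notMem⟩

theorem subfunction_succ (f : (Fin n → Bool) → Bool) (π : Equiv.Perm (Fin n)) (j : Fin n)
    (ν ν' : Fin n → Bool) :
    subfunction f π (j + 1) ν ν' = subfunction f π j ν (Function.update ν' (π j) (ν (π j))) := by
  refine congrArg f (funext fun i => ?_)
  obtain ⟨t, rfl⟩ := π.surjective i
  rcases eq_or_ne t j with rfl | ht
  · simp [splice]
  · have : (t : ℕ) ≠ j := Fin.val_ne_of_ne ht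
    simp [splice, ht, show (t : ℕ) < j + 1 ↔ (t : ℕ) < j by omega]

theorem mem_OBDDclass_of_subfunction_mem_range {σ : Type*} [Fintype σ] (f : (Fin n → Bool) → Bool)
    (π : Equiv.Perm (Fin n))
    (h : ∀ j, ∃ G : σ → (Fin n → Bool) → Bool, ∀ ν, subfunction f π j ν ∈ Set.range G) :
    f ∈ OBDDclass n (Fintype.card σ) := by
  classical
  choose G hG using h
  have : Nonempty σ := ⟨(hG 0 fun _ => false).choose⟩
  let e := Fintype.equivFin σ
  -- A node `v` at level `j` stands for the subfunction `G j (e.symm v)`.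
  let node (j : ℕ) (g : (Fin n → Bool) → Bool) : Fin (Fintype.card σ) :=
    e (Function.invFun (G j) g)
  have node_spec (j : ℕ) (ν : Fin n → Bool) :
      G j (e.symm (node j (subfunction f π j ν))) = subfunction f π j ν := by
    rw [e.symm_apply_apply]
    exact Function.invFun_eq (hG j ν)
  let M : DOBDD n (Fintype.card σ) :=
    { ord := π
      T := fun j b v => node (j + 1) fun ν => G j (e.symm v) (Function.update ν (π j) b)
      start := node 0 f
      Accept := Finset.univ.filter fun v => ∀ ν, G n (e.symm v) ν = true }
  refine ⟨_, le_rfl, M, fun ν => ?_⟩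
  have run_spec : G n (e.symm (M.run ν)) = subfunction f π n ν := by
    refine foldl_finRange_induction (fun j v => G j (e.symm v) = subfunction f π j ν) _ _
      (node_spec 0 ν) fun j v hv => ?_
    simp only [M, hv, ← subfunction_succ]
    exact node_spec (j + 1) ν
  simp [DOBDD.accepts, M, run_spec, subfunction, splice_last]

theorem mem_foldl_finRange_iff_exists_path {α : Type*} (R : Fin n → α → α → Prop) (s v : α) :
    v ∈ (List.finRange n).foldl (fun S j => {w | ∃ u ∈ S, R j u w}) ({s} : Set α) ↔
      ∃ p : ℕ → α, p 0 = s ∧ (∀ j : Fin n, R j (p j) (p (j + 1))) ∧ p n = v := by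
  induction n generalizing v with
  | zero =>
    simp only [List.finRange_zero, List.foldl_nil, Set.mem_singleton_iff, IsEmpty.forall_iff,
      true_and]
    exact ⟨fun h => ⟨fun _ => s, rfl, h.symm⟩, fun ⟨p, h0, hv⟩ => hv.symm.trans h0⟩
  | succ n ih =>
    rw [List.finRange_succ_last, List.foldl_append, List.foldl_map]
    simp only [List.foldl_cons, List.foldl_nil, Set.mem_ofPred_eq, ih fun j => R j.castSucc]
    constructor
    · rintro ⟨_, ⟨p, h0, hp, rfl⟩, hv⟩
      refine ⟨Function.update p (n + 1) v, by simpa using h0, fun j => ?_, by simp⟩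
      induction j using Fin.lastCases with
      | last => simpa using hv
      | cast j =>
        have := j.isLt
        simpa [Function.update_of_ne, this.ne, (this.trans (Nat.lt_succ_self n)).ne] using hp j
    · rintro ⟨p, h0, hp, rfl⟩
      exact ⟨p n, ⟨p, h0, fun j => hp j.castSucc, rfl⟩, hp (Fin.last n)⟩

theorem NOBDD.accepts_iff_exists_path {d : ℕ} (M : NOBDD n d) (ν : Fin n → Bool) :
    M.accepts ν ↔ ∃ p : ℕ → Fin d, p 0 = M.start ∧
      (∀ j : Fin n, p (j + 1) ∈ M.T j (ν (M.ord j)) (p j)) ∧ p n ∈ M.Accept := by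
  simp only [NOBDD.accepts, NOBDD.reach,
    mem_foldl_finRange_iff_exists_path fun j u w => w ∈ M.T j (ν (M.ord j)) u]
  constructor
  · rintro ⟨_, ⟨p, h0, hp, rfl⟩, hacc⟩
    exact ⟨p, h0, hp, hacc⟩
  · rintro ⟨p, h0, hp, hacc⟩
    exact ⟨p n, ⟨p, h0, hp, rfl⟩, hacc⟩

theorem NOBDD.card_le_of_foolingSet {d : ℕ} {ι : Type*} [Fintype ι] (M : NOBDD n d) (l : ℕ)
    (ν : ι → Fin n → Bool) (accepts : ∀ x, M.accepts (ν x))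
    (eq_of_accepts : ∀ x y, M.accepts (splice M.ord l (ν x) (ν y)) →
      M.accepts (splice M.ord l (ν y) (ν x)) → x = y) :
    Fintype.card ι ≤ d := by
  choose p p_zero p_step p_last using fun x => (M.accepts_iff_exists_path (ν x)).1 (accepts x)
  have accepts_splice (x y : ι) (hxy : p x l = p y l) :
      M.accepts (splice M.ord l (ν x) (ν y)) := by
    refine (M.accepts_iff_exists_path _).2
      ⟨fun t => if t ≤ l then p x t else p y t, by simpa using p_zero x, fun j => ?_, ?_⟩
    · rcases lt_trichotomy (j : ℕ) l with hj | hj | hj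
      · simpa [splice, hj, hj.le, Nat.succ_le_of_lt hj] using p_step x j
      · subst hj
        simpa [splice, hxy] using p_step y j
      · simpa [splice, hj.not_ge, hj.not_gt, (hj.trans (Nat.lt_succ_self j)).not_ge] using
          p_step y j
    · dsimp only
      split_ifs
      exacts [p_last x, p_last y]
  have injective : Function.Injective fun x => p x l := fun x y h =>
    eq_of_accepts x y (accepts_splice x y h) (accepts_splice y x h.symm)
  simpa using Fintype.card_le_of_injective _ injective

end Classes

section Cut

variable {α : Type*}

theorem exists_card_filter_lt_eq (s : Finset α) (g : α → ℕ) (hg : Set.InjOn g s) {q : ℕ}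
    (hq : q ≤ s.card) : ∃ l, (s.filter fun x => g x < l).card = q := by
  classical
  have reached : ∃ l, q ≤ (s.filter fun x => g x < l).card := by
    refine ⟨s.sup g + 1, ?_⟩
    rwa [Finset.filter_true_of_mem fun x hx => Nat.lt_succ_of_le (Finset.le_sup hx)]
  refine ⟨Nat.find reached, (Nat.find_spec reached).antisymm' ?_⟩
  rcases hl : Nat.find reached with _ | l
  · simp
  have before : (s.filter fun x => g x < l).card < q := not_le.1 (Nat.find_min reached (by omega))
  have at_most_one : (s.filter fun x => g x = l).card ≤ 1 :=
    Finset.card_le_one.2 fun x hx y hy => by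
      simp only [Finset.mem_filter] at hx hy
      exact hg hx.1 hy.1 (hx.2.trans hy.2.symm)
  calc (s.filter fun x => g x < l + 1).card
      = ((s.filter fun x => g x < l) ∪ s.filter fun x => g x = l).card := by
        simp only [← Finset.filter_or, Order.lt_add_one_iff, le_iff_lt_or_eq]
    _ ≤ (s.filter fun x => g x < l).card + (s.filter fun x => g x = l).card :=
        Finset.card_union_le _ _
    _ ≤ q := by omega

theorem exists_map_eq_of_nodup {β : Type*} [Inhabited β] {L : List α} (hL : L.Nodup)
    {x : List β} (hx : x.length = L.length) : ∃ z : α → β, L.map z = x := by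
  classical
  exact ⟨fun a => x.getD (L.idxOf a) default, List.ext_getElem (by simp [hx]) fun i _ hi => by
    simp [hL.idxOf_getElem, hi]⟩

end Cut

section EQS

variable {n : ℕ}

/-- The value bit of the `j`-th (marker, value) pair of `ν`, provided that its marker is `b`. -/
def markedValue (b : Bool) (ν : Fin n → Bool) (j : ℕ) : Option Bool :=
  if h : 2 * j + 1 < n then
    if ν ⟨2 * j, by omega⟩ = b then some (ν ⟨2 * j + 1, h⟩) else none
  else none

/-- The contribution to `valueSubseq k b ν` of the pairs from the `i`-th one on. -/
def valueSuffix (k i : ℕ) (b : Bool) (ν : Fin n → Bool) : List Bool :=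
  (List.range' i (k / 2 - i)).filterMap (markedValue b ν)

theorem valueSubseq_eq_filterMap (k : ℕ) (b : Bool) (ν : Fin n → Bool) :
    valueSubseq k b ν = (List.range (k / 2)).filterMap (markedValue b ν) :=
  rfl

theorem valueSubseq_append_valueSuffix {k i : ℕ} (h : 2 * i ≤ k) (b : Bool) (ν : Fin n → Bool) :
    valueSubseq (2 * i) b ν ++ valueSuffix k i b ν = valueSubseq k b ν := by
  obtain ⟨r, hr⟩ := Nat.exists_eq_add_of_le (show i ≤ k / 2 by omega)
  simp only [valueSubseq_eq_filterMap, valueSuffix, ← List.filterMap_append, List.range_eq_range']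
  rw [Nat.mul_div_cancel_left i two_pos, hr, Nat.add_sub_cancel_left, ← List.range'_append_1,
    zero_add]

theorem valueSuffix_eq_append {k i : ℕ} (h : 2 * i + 1 < k) (b : Bool) (ν : Fin n → Bool) :
    valueSuffix k i b ν = (markedValue b ν i).toList ++ valueSuffix k (i + 1) b ν := by
  rw [valueSuffix, show k / 2 - i = k / 2 - (i + 1) + 1 by omega, List.range'_succ,
    List.filterMap_cons]
  cases markedValue b ν i <;> rfl

theorem length_valueSuffix_le (k i : ℕ) (b : Bool) (ν : Fin n → Bool) :
    (valueSuffix k i b ν).length ≤ k / 2 - i :=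
  (List.length_filterMap_le _ _).trans_eq List.length_range'

theorem length_valueSubseq_add_length {i : ℕ} (h : 2 * i ≤ n) (ν : Fin n → Bool) (b : Bool) :
    (valueSubseq (2 * i) b ν).length + (valueSubseq (2 * i) (!b) ν).length = i := by
  simp only [valueSubseq_eq_filterMap, Nat.mul_div_cancel_left i two_pos]
  induction i with
  | zero => simp
  | succ i ih =>
    have hi : 2 * i + 1 < n := by omega
    have := ih (by omega)
    simp only [List.range_succ, List.filterMap_append, List.length_append, List.filterMap_cons,
      List.filterMap_nil, markedValue, hi, dite_true]
    cases b <;> cases ν ⟨2 * i, by omega⟩ <;> grind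

theorem markedValue_splice_of_le {i j : ℕ} (h : 2 * i + 2 ≤ j) (b : Bool) (ν ν' : Fin n → Bool) :
    markedValue b (splice (Equiv.refl _) j ν ν') i = markedValue b ν i := by
  simp [markedValue, splice, show 2 * i < j by omega, show 2 * i + 1 < j by omega]

theorem markedValue_splice_of_ge {i j : ℕ} (h : j ≤ 2 * i) (b : Bool) (ν ν' : Fin n → Bool) :
    markedValue b (splice (Equiv.refl _) j ν ν') i = markedValue b ν' i := by
  simp [markedValue, splice, show ¬ 2 * i < j by omega, show ¬ 2 * i + 1 < j by omega]

theorem markedValue_splice_between {i : ℕ} (h : 2 * i + 1 < n) (b : Bool) (ν ν' : Fin n → Bool) :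
    markedValue b (splice (Equiv.refl _) (2 * i + 1) ν ν') i =
      if ν ⟨2 * i, by omega⟩ = b then some (ν' ⟨2 * i + 1, h⟩) else none := by
  simp [markedValue, splice, h]

theorem valueSubseq_splice {i j : ℕ} (h : 2 * i ≤ j) (b : Bool) (ν ν' : Fin n → Bool) :
    valueSubseq (2 * i) b (splice (Equiv.refl _) j ν ν') = valueSubseq (2 * i) b ν :=
  List.filterMap_congr fun t ht =>
    markedValue_splice_of_le (by have := List.mem_range.1 ht; omega) b ν ν'

theorem valueSuffix_splice (k : ℕ) {i j : ℕ} (h : j ≤ 2 * i) (b : Bool) (ν ν' : Fin n → Bool) :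
    valueSuffix k i b (splice (Equiv.refl _) j ν ν') = valueSuffix k i b ν' :=
  List.filterMap_congr fun t ht =>
    markedValue_splice_of_ge (by have := (List.mem_range'_1.1 ht).1; omega) b ν ν'

end EQS

section UpperBound

theorem exists_overhang {α Y : Type*} (A : Bool → List α) (B : Bool → Y → List α) :
    (∀ y, A false ++ B false y ≠ A true ++ B true y) ∨
      ∃ b u, A b = A (!b) ++ u ∧ (∃ y, u ++ B b y = B (!b) y) ∧
        ∀ y, A false ++ B false y = A true ++ B true y ↔ u ++ B b y = B (!b) y := by
  refine or_iff_not_imp_left.2 fun h => ?_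
  push Not at h
  obtain ⟨y, hy⟩ := h
  rcases List.append_eq_append_iff.1 hy with ⟨u, hA, hB⟩ | ⟨u, hA, hB⟩
  · exact ⟨true, u, hA, ⟨y, hB.symm⟩, fun y => by simp [hA, eq_comm]⟩
  · exact ⟨false, u, hA, ⟨y, hB.symm⟩, fun y => by simp [hA]⟩

/-- The nodes of an OBDD for `EQS`: `none` is the rejecting sink, and `some (b, w)` records that
the values marked `b` are ahead, by an overhang `w` of at most `q` bits. Between a marker and its
value, the last bit of `w` may be a placeholder for that value. -/
abbrev OverhangState (q : ℕ) : Type :=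
  Option (Bool × Σ k : Fin (q + 1), List.Vector Bool k)

theorem card_overhangState_le (q : ℕ) : Fintype.card (OverhangState q) ≤ 4 * 2 ^ q := by
  have card_words : Fintype.card (Σ k : Fin (q + 1), List.Vector Bool k) = 2 ^ (q + 1) - 1 := by
    simp only [Fintype.card_sigma, card_vector, Fintype.card_bool]
    rw [Fin.sum_univ_eq_sum_range (fun k => 2 ^ k), Nat.geomSum_eq le_rfl, Nat.div_one]
  have := Nat.one_le_two_pow (n := q)
  rw [Fintype.card_option, Fintype.card_prod, Fintype.card_bool, card_words, pow_succ]
  omega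

theorem exists_overhangState_cover {X Y : Type*} {q : ℕ} {r : Y → X} (reject : X)
    (F : Bool → List Bool → X) (h : ∀ y, r y = reject ∨ ∃ b w, w.length ≤ q ∧ r y = F b w) :
    ∃ G : OverhangState q → X, ∀ y, r y ∈ Set.range G := by
  refine ⟨fun s => s.elim reject fun p => F p.1 p.2.2.toList, fun y => ?_⟩
  rcases h y with hy | ⟨b, w, hw, hy⟩
  · exact ⟨none, hy.symm⟩
  · exact ⟨some (b, ⟨⟨w.length, Nat.lt_succ_of_le hw⟩, ⟨w, rfl⟩⟩), hy.symm⟩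

variable {n q i : ℕ}

theorem valueSubseq_splice_two_mul {k : ℕ} (hi : 2 * i ≤ k) (b : Bool) (ν ν' : Fin n → Bool) :
    valueSubseq k b (splice (Equiv.refl _) (2 * i) ν ν') =
      valueSubseq (2 * i) b ν ++ valueSuffix k i b ν' := by
  rw [← valueSubseq_append_valueSuffix hi, valueSubseq_splice le_rfl, valueSuffix_splice _ le_rfl]

theorem valueSubseq_splice_two_mul_add_one {k : ℕ} (hk : 2 * i + 1 < k) (hn : 2 * i + 1 < n)
    (b : Bool) (ν ν' : Fin n → Bool) :
    valueSubseq k b (splice (Equiv.refl _) (2 * i + 1) ν ν') =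
      valueSubseq (2 * i) b ν ++ if ν ⟨2 * i, by omega⟩ = b then
        ν' ⟨2 * i + 1, hn⟩ :: valueSuffix k (i + 1) b ν' else valueSuffix k (i + 1) b ν' := by
  rw [← valueSubseq_append_valueSuffix (show 2 * i ≤ k by omega),
    valueSubseq_splice (Nat.le_succ _), valueSuffix_eq_append hk,
    valueSuffix_splice _ (Nat.le_succ _), markedValue_splice_between hn]
  split_ifs <;> rfl

theorem subfunction_EQS_two_mul (hq : 4 * q ≤ n) (hi : i ≤ 2 * q) (ν : Fin n → Bool) :
    subfunction (EQS n (4 * q)) (Equiv.refl _) (2 * i) ν = (fun _ => false) ∨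
      ∃ b w, w.length ≤ q ∧ subfunction (EQS n (4 * q)) (Equiv.refl _) (2 * i) ν =
        fun ν' => decide (w ++ valueSuffix (4 * q) i b ν' = valueSuffix (4 * q) i (!b) ν') := by
  simp only [funext_iff, subfunction, EQS, valueSubseq_splice_two_mul (show 2 * i ≤ 4 * q by omega),
    decide_eq_false_iff_not, decide_eq_decide]
  refine (exists_overhang (fun b => valueSubseq (2 * i) b ν) (valueSuffix (4 * q) i)).imp_right ?_
  rintro ⟨b, u, hu, ⟨ν', hν'⟩, h⟩
  have read := length_valueSubseq_add_length (show 2 * i ≤ n by omega) ν b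
  have unread := length_valueSuffix_le (4 * q) i (!b) ν'
  rw [← hν'] at unread
  simp only [hu, List.length_append] at read unread
  exact ⟨b, u, by omega, h⟩

theorem subfunction_EQS_two_mul_add_one (hq : 4 * q ≤ n) (hi : 2 * i + 1 < 4 * q)
    (ν : Fin n → Bool) :
    subfunction (EQS n (4 * q)) (Equiv.refl _) (2 * i + 1) ν = (fun _ => false) ∨
      ∃ b w, w.length ≤ q ∧ subfunction (EQS n (4 * q)) (Equiv.refl _) (2 * i + 1) ν =
        fun ν' =>
          let pending := ν' ⟨2 * i + 1, hi.trans_le hq⟩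
          if w.length % 2 = i % 2 then
            decide (w ++ valueSuffix (4 * q) (i + 1) b ν' =
              pending :: valueSuffix (4 * q) (i + 1) (!b) ν')
          else
            decide (w.dropLast ++ pending :: valueSuffix (4 * q) (i + 1) b ν' =
              valueSuffix (4 * q) (i + 1) (!b) ν') := by
  set m := ν ⟨2 * i, by omega⟩
  let B (b : Bool) (ν' : Fin n → Bool) : List Bool :=
    if m = b then ν' ⟨2 * i + 1, hi.trans_le hq⟩ :: valueSuffix (4 * q) (i + 1) b ν'
    else valueSuffix (4 * q) (i + 1) b ν'
  have eqs (ν' : Fin n → Bool) : subfunction (EQS n (4 * q)) (Equiv.refl _) (2 * i + 1) ν ν' =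
      decide (valueSubseq (2 * i) false ν ++ B false ν' =
        valueSubseq (2 * i) true ν ++ B true ν') := by
    simp only [subfunction, EQS, valueSubseq_splice_two_mul_add_one hi (hi.trans_le hq), B, m]
  simp only [funext_iff, eqs, decide_eq_false_iff_not]
  refine (exists_overhang (fun b => valueSubseq (2 * i) b ν) B).imp_right ?_
  rintro ⟨b, u, hu, ⟨ν', hν'⟩, h⟩
  have read := length_valueSubseq_add_length (show 2 * i ≤ n by omega) ν b
  have unread := length_valueSuffix_le (4 * q) (i + 1) (!b) ν'
  have lengths := congrArg List.length hν'
  simp only [hu, List.length_append] at read lengths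
  -- The parity of `u.length` is that of `i`, so appending a bit for the pending value, when that
  -- value extends the overhang, reveals the marker without a separate bit of memory.
  by_cases hb : m = b
  · have hb' : m ≠ !b := by simp [hb]
    simp only [B, if_pos hb, if_neg hb', List.length_cons] at lengths h
    refine ⟨b, u ++ [false], by grind, fun ν' => ?_⟩
    rw [if_neg (by grind), List.dropLast_concat, decide_eq_decide]
    exact h ν'
  · have hb' : m = !b := Bool.eq_not.2 hb
    simp only [B, if_neg hb, if_pos hb', List.length_cons] at lengths h
    refine ⟨b, u, by omega, fun ν' => ?_⟩
    rw [if_pos (by omega), decide_eq_decide]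
    exact h ν'

theorem subfunction_EQS_of_le {j : ℕ} (hj : 4 * q ≤ j) (ν : Fin n → Bool) :
    subfunction (EQS n (4 * q)) (Equiv.refl _) j ν = fun _ => EQS n (4 * q) ν := by
  have h : 4 * q = 2 * (2 * q) := by omega
  funext ν'
  simp only [subfunction, EQS, h, valueSubseq_splice (h.symm.trans_le hj)]

theorem EQS_mem_OBDDclass (hq : 4 * q ≤ n) : EQS n (4 * q) ∈ OBDDclass n (4 * 2 ^ q) := by
  refine OBDDclass_mono (card_overhangState_le q)
    (mem_OBDDclass_of_subfunction_mem_range _ (Equiv.refl _) fun j => ?_)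
  rcases le_or_gt (4 * q) j with hj | hj
  · refine exists_overhangState_cover (fun _ => false) (fun _ _ _ => true) fun ν => ?_
    rw [subfunction_EQS_of_le hj]
    cases EQS n (4 * q) ν
    · exact .inl rfl
    · exact .inr ⟨false, [], Nat.zero_le _, rfl⟩
  · obtain ⟨i, rfl | rfl⟩ := j.even_or_odd'
    · exact exists_overhangState_cover _ _ (subfunction_EQS_two_mul hq (by omega))
    · exact exists_overhangState_cover _ _ (subfunction_EQS_two_mul_add_one hq hj)

end UpperBound

section LowerBound

variable {n q : ℕ}

/-- The input whose `j`-th (marker, value) pair is `(a j, z j)`. -/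
def interleave (n : ℕ) (a z : ℕ → Bool) : Fin n → Bool :=
  fun t => if (t : ℕ) % 2 = 0 then a (t / 2) else z (t / 2)

/-- The time at which the order `π` reads the value bit of the `j`-th (marker, value) pair, with
the junk value `0` when there is no such pair. -/
def valueTime (π : Equiv.Perm (Fin n)) (j : ℕ) : ℕ :=
  if h : 2 * j + 1 < n then π.symm ⟨2 * j + 1, h⟩ else 0

theorem injOn_valueTime (π : Equiv.Perm (Fin n)) :
    Set.InjOn (valueTime π) {j | 2 * j + 1 < n} := by
  intro i hi j hj hij
  simp only [Set.mem_ofPred_eq] at hi hj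
  simp only [valueTime, hi, hj, dite_true, Fin.val_inj, EmbeddingLike.apply_eq_iff_eq,
    Fin.mk.injEq] at hij
  omega

/-- The markers that make the values read before time `l` in the order `π` compared with those
read from time `l` on. -/
def cutMarker (π : Equiv.Perm (Fin n)) (l j : ℕ) : Bool :=
  !decide (valueTime π j < l)

theorem markedValue_splice_interleave (π : Equiv.Perm (Fin n)) (l : ℕ) {j : ℕ} (h : 2 * j + 1 < n)
    (b : Bool) (z z' : ℕ → Bool) :
    markedValue b
        (splice π l (interleave n (cutMarker π l) z) (interleave n (cutMarker π l) z')) j =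
      if cutMarker π l j = b then some (if b then z' j else z j) else none := by
  have value_pair : (2 * j + 1) / 2 = j := by omega
  by_cases hl : valueTime π j < l <;> cases b <;>
    simp_all [markedValue, splice, interleave, cutMarker, valueTime]

theorem valueSubseq_splice_interleave (π : Equiv.Perm (Fin n)) (l : ℕ) (hq : 4 * q ≤ n) (b : Bool)
    (z z' : ℕ → Bool) :
    valueSubseq (4 * q) b
        (splice π l (interleave n (cutMarker π l) z) (interleave n (cutMarker π l) z')) =
      ((List.range (2 * q)).filter fun j => cutMarker π l j = b).map (if b then z' else z) := by
  rw [valueSubseq_eq_filterMap, ← List.filterMap_eq_map, ← List.filterMap_eq_filter,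
    List.filterMap_filterMap, show 4 * q / 2 = 2 * q by omega]
  refine List.filterMap_congr fun j hj => ?_
  rw [markedValue_splice_interleave π l (by have := List.mem_range.1 hj; omega)]
  by_cases hb : cutMarker π l j = b <;> cases b <;> simp [hb, Option.guard]

theorem exists_cut (π : Equiv.Perm (Fin n)) (hq : 4 * q ≤ n) :
    ∃ l, ∀ b, ((List.range (2 * q)).filter fun j => cutMarker π l j = b).length = q := by
  obtain ⟨l, hl⟩ := exists_card_filter_lt_eq (q := q) (Finset.range (2 * q)) (valueTime π)
    ((injOn_valueTime π).mono fun j hj => by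
      have := Finset.mem_range.1 hj
      simp only [Set.mem_ofPred_eq]
      omega)
    (by rw [Finset.card_range]; omega)
  have early : ((List.range (2 * q)).filter fun j => cutMarker π l j = false).length = q := by
    simp only [cutMarker, Bool.not_eq_false', decide_eq_true_eq]
    exact hl
  refine ⟨l, Bool.forall_bool.2 ⟨early, ?_⟩⟩
  have := List.length_eq_length_filter_add (l := List.range (2 * q)) (cutMarker π l ·)
  simp only [List.length_range, Bool.decide_eq_true, Bool.decide_eq_false] at this early ⊢
  omega

theorem exists_map_filter_eq {m : ℕ} (c : ℕ → Bool)
    (hc : ∀ b, ((List.range m).filter fun j => c j = b).length = q) (x : List.Vector Bool q) :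
    ∃ z : ℕ → Bool, ∀ b, ((List.range m).filter fun j => c j = b).map z = x.toList := by
  choose z hz using fun b => exists_map_eq_of_nodup (List.nodup_range.filter fun j => c j = b)
    (x.toList_length.trans (hc b).symm)
  refine ⟨fun j => z (c j) j, fun b => ?_⟩
  rw [← hz b]
  refine List.map_congr_left fun j hj => ?_
  rw [of_decide_eq_true (List.mem_filter.1 hj).2]

theorem two_pow_le_of_computes_EQS {d : ℕ} (hq : 4 * q ≤ n) (M : NOBDD n d)
    (hM : M.computes (EQS n (4 * q))) : 2 ^ q ≤ d := by
  obtain ⟨l, hl⟩ := exists_cut M.ord hq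
  choose z hz using exists_map_filter_eq (cutMarker M.ord l) hl
  let ν (x : List.Vector Bool q) : Fin n → Bool := interleave n (cutMarker M.ord l) (z x)
  have accepts_splice (x y : List.Vector Bool q) :
      M.accepts (splice M.ord l (ν x) (ν y)) ↔ x = y := by
    simp only [hM _, EQS, ν, decide_eq_true_iff, valueSubseq_splice_interleave M.ord l hq,
      Bool.false_eq_true, if_true, if_false, hz, List.Vector.toList_injective.eq_iff]
  have card_le := M.card_le_of_foolingSet l ν
    (fun x => by simpa [splice_self] using (accepts_splice x x).2 rfl)
    fun x y hxy _ => (accepts_splice x y).1 hxy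
  rwa [card_vector, Fintype.card_bool] at card_le

theorem EQS_notMem_NOBDDclass {w : ℕ} (hq : 4 * q ≤ n) (hw : w < 2 ^ q) :
    EQS n (4 * q) ∉ NOBDDclass n w :=
  fun ⟨_, hd, M, hM⟩ => hw.not_ge ((two_pow_le_of_computes_EQS hq M hM).trans hd)

end LowerBound

theorem large_width_hierarchy_general (n d : ℕ) (h1 : 4 ≤ d) (h2 : d < 2 ^ (n / 4 + 3)) :
    ∃ f ∈ OBDDclass n d, f ∉ NOBDDclass n (d / 8) := by
  have log_ge : 2 ≤ Nat.log 2 d := Nat.le_log_of_pow_le one_lt_two h1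
  have log_lt : Nat.log 2 d < n / 4 + 3 := Nat.log_lt_of_lt_pow (by omega) h2
  obtain ⟨q, hq⟩ := Nat.exists_eq_add_of_le' log_ge
  have width_ge : 4 * 2 ^ q ≤ d :=
    calc 4 * 2 ^ q = 2 ^ Nat.log 2 d := by rw [hq]; ring
      _ ≤ d := Nat.pow_log_le_self 2 (by omega)
  have width_lt : d < 8 * 2 ^ q :=
    calc d < 2 ^ (Nat.log 2 d + 1) := Nat.lt_pow_succ_log_self one_lt_two d
      _ = 8 * 2 ^ q := by rw [hq]; ring
  have hqn : 4 * q ≤ n := by omega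
  exact ⟨EQS n (4 * q), OBDDclass_mono width_ge (EQS_mem_OBDDclass hqn),
    EQS_notMem_NOBDDclass hqn (Nat.div_lt_of_lt_mul width_lt)⟩

/-- For all `n, d` with `16 ≤ d ≤ 2^{n/4}`: `OBDD^{⌊d/8⌋-1} ⊊ OBDD^d` and
`NOBDD^{⌊d/8⌋-1} ⊊ NOBDD^d`. -/
theorem large_width_hierarchy (n d : ℕ) (h1 : 16 ≤ d) (h2 : d ≤ 2 ^ (n / 4)) :
    (∃ f : (Fin n → Bool) → Bool, f ∈ OBDDclass n d ∧ f ∉ OBDDclass n (d / 8 - 1)) ∧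
    (∃ f : (Fin n → Bool) → Bool, f ∈ NOBDDclass n d ∧ f ∉ NOBDDclass n (d / 8 - 1)) ∧
    OBDDclass n (d / 8 - 1) ⊂ OBDDclass n d ∧
    NOBDDclass n (d / 8 - 1) ⊂ NOBDDclass n d := by
  obtain ⟨f, f_mem, f_notMem⟩ := large_width_hierarchy_general n d (by omega)
    (h2.trans_lt (Nat.pow_lt_pow_right one_lt_two (by omega)))
  obtain ⟨det, nondet⟩ := OBDDclass_ssubset_and_NOBDDclass_ssubset (w := d / 8 - 1) (by omega)
    f_mem fun h => f_notMem (NOBDDclass_mono (Nat.sub_le _ _) h)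
  exact ⟨Set.exists_of_ssubset det, Set.exists_of_ssubset nondet, det, nondet⟩
end
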